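/- arXiv:1304.3918 — 2 statements merged into one kernel-verified Lean document; each statement's English description precedes it below -/
import Mathlib

section
/- Let N ≥ 3, μ ∈ ℝ and σ > 0. Let a be a strictly upper-triangular real N×N matrix with ∑_{1 ≤ i < j ≤ N} a_{ij} = 0, and suppose that for every ξ ≠ 0 the function g ↦ ∑_{1 ≤ i < j ≤ N} a_{ij}·log(u_ξ(g_i) − u_ξ(g_j)) is Lebesgue integrable on the simplex Δ_N and satisfies N! · ∫_{Δ_N} ∑_{1 ≤ i < j ≤ N} a_{ij}·log(u_ξ(g_i) − u_ξ(g_j)) dg = ξ. Then a lies in the real linear span of the elemental weight matrices {E^{(I,J)} : 1 ≤ I, I+2 ≤ J ≤ N}. That is, every location- and scale-invariant, absolutely unbiased estimator of the GPD tail parameter that is a linear combination of log-spacings is a linear combination of elementals. -/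
open MeasureTheory Real Set

/-- The GPD tail-quantile function: `u_ξ(t) = μ + (σ/ξ)(t^{-ξ} - 1)` for `ξ ≠ 0`,
and `u_0(t) = μ - σ log t`. -/
noncomputable def gpdQ (μ σ ξ : ℝ) (t : ℝ) : ℝ :=
  if ξ = 0 then μ - σ * Real.log t else μ + σ / ξ * (t ^ (-ξ) - 1)

/-- The open simplex `Δ_N = {g : 0 < g 1 < ⋯ < g N < 1}` in `ℝ^N`. -/
def simplex (n : ℕ) : Set (Fin n → ℝ) :=
  {g | StrictMono g ∧ ∀ i, 0 < g i ∧ g i < 1}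

/-- The data tuple `X_i = u(g_i)` (1-based indexing: `sample n u g i = u (g_{i-1})`,
for `1 ≤ i ≤ n`; junk value `0` outside this range). -/
noncomputable def sample (n : ℕ) (u : ℝ → ℝ) (g : Fin n → ℝ) : ℕ → ℝ :=
  fun i => if h : i - 1 < n then u (g ⟨i - 1, h⟩) else 0

/-- The elemental weight matrix `E^{(I,J)}` (as a function `ℕ → ℕ → ℝ` with 1-based
indices): its only nonzero entries are `E_{I,J−1} = J−1`, `E_{I,J} = −(J−1−I)` and
`E_{I+1,J} = −I`. -/
noncomputable def elemMatrix (I J : ℕ) : ℕ → ℕ → ℝ := fun i j =>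
  if i = I ∧ j = J - 1 then (J : ℝ) - 1
  else if i = I ∧ j = J then -((J : ℝ) - 1 - (I : ℝ))
  else if i = I + 1 ∧ j = J then -(I : ℝ)
  else 0


/-- Moments of ratio of uniform order statistics. -/
noncomputable def momR (i j : ℕ) (s : ℝ) : ℝ := ∏ l ∈ Finset.Ico i j, (l : ℝ) / (l + s)

noncomputable def serT (i j : ℕ) (ξ : ℝ) : ℝ :=
  ∑' k : ℕ, (1 / ((k : ℝ) + 1)) * momR i j (((k : ℝ) + 1) * ξ)

lemma momR_pos {i j : ℕ} (hi : 1 ≤ i) {s : ℝ} (hs : 0 < s) : 0 < momR i j s := by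
  unfold momR
  refine Finset.prod_pos fun l hl => ?_
  have : 1 ≤ l := hi.trans (Finset.mem_Ico.1 hl).1
  have : (0 : ℝ) < l := by exact_mod_cast this
  positivity

lemma momR_le_one {i j : ℕ} {s : ℝ} (hs : 0 < s) : momR i j s ≤ 1 := by
  unfold momR
  refine Finset.prod_le_one (fun l hl => by positivity) fun l hl => ?_
  rw [div_le_one (by positivity)]
  linarith

lemma momR_left {i j : ℕ} (hij : i < j) (s : ℝ) :
    momR i j s = (i : ℝ) / (i + s) * momR (i + 1) j s := by
  unfold momR
  rw [Finset.prod_eq_prod_Ico_succ_bot hij]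

lemma momR_le {i j : ℕ} (hij : i < j) {s : ℝ} (hs : 0 < s) : momR i j s ≤ (i : ℝ) / (i + s) := by
  rw [momR_left hij]
  exact mul_le_of_le_one_right (by positivity) (momR_le_one hs)

lemma serT_summable {i j : ℕ} (hi : 1 ≤ i) (hij : i < j) {ξ : ℝ} (hξ : 0 < ξ) :
    Summable fun k : ℕ => (1 / ((k : ℝ) + 1)) * momR i j (((k : ℝ) + 1) * ξ) := by
  have h1 : Summable fun k : ℕ => ((i : ℝ) / ξ) * (1 / ((k : ℝ) + 1) ^ 2) := by
    apply Summable.mul_left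
    have := (summable_nat_add_iff 1).2 (Real.summable_one_div_nat_pow.2 (one_lt_two))
    simpa using this
  refine Summable.of_nonneg_of_le (fun k => ?_) (fun k => ?_) h1
  · have := (momR_pos hi (j := j) (s := ((k : ℝ) + 1) * ξ) (by positivity)).le
    positivity
  · have h2 := momR_le hij (s := ((k : ℝ) + 1) * ξ) (by positivity)
    have h3 : (i : ℝ) / (i + ((k : ℝ) + 1) * ξ) ≤ (i : ℝ) / (((k : ℝ) + 1) * ξ) := by
      apply div_le_div_of_nonneg_left <;> first | positivity | linarith [Nat.cast_nonneg (α := ℝ) i]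
    calc (1 / ((k : ℝ) + 1)) * momR i j (((k : ℝ) + 1) * ξ)
        ≤ (1 / ((k : ℝ) + 1)) * ((i : ℝ) / (((k : ℝ) + 1) * ξ)) := by
          gcongr; exact h2.trans h3
      _ = _ := by field_simp

lemma serT_pos {i j : ℕ} (hi : 1 ≤ i) (hij : i < j) {ξ : ℝ} (hξ : 0 < ξ) : 0 < serT i j ξ := by
  have hp : ∀ k : ℕ, 0 < (1 / ((k : ℝ) + 1)) * momR i j (((k : ℝ) + 1) * ξ) := fun k => by
    have := (momR_pos hi (j := j) (s := ((k : ℝ) + 1) * ξ) (by positivity))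
    positivity
  exact (serT_summable hi hij hξ).tsum_pos (fun k => (hp k).le) 0 (hp 0)

lemma serT_succ_le {i j : ℕ} (hi : 1 ≤ i) (hij : i + 1 < j) {ξ : ℝ} (hξ : 0 < ξ) :
    serT i j ξ ≤ (i : ℝ) / (i + ξ) * serT (i + 1) j ξ := by
  unfold serT
  rw [← tsum_mul_left]
  refine (serT_summable hi (by omega) hξ).tsum_le_tsum (fun k => ?_)
    ((serT_summable (by omega) hij hξ).mul_left _)
  have h0 := (momR_pos (i := i + 1) (by omega) (j := j) (s := ((k : ℝ) + 1) * ξ) (by positivity)).le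
  rw [momR_left (by omega)]
  have : (i : ℝ) / (i + ((k : ℝ) + 1) * ξ) ≤ i / (i + ξ) := by
    have : 0 ≤ (k : ℝ) * ξ := by positivity
    apply div_le_div_of_nonneg_left <;> first | positivity | nlinarith
  calc _ = (i : ℝ) / (i + ((k : ℝ) + 1) * ξ) * (1 / ((k : ℝ) + 1) * momR (i + 1) j (((k : ℝ) + 1) * ξ)) := by ring
    _ ≤ _ := by gcongr

lemma serT_mono {i i' j : ℕ} (hi : 1 ≤ i) (hii : i ≤ i') (hij : i' < j) {ξ : ℝ} (hξ : 0 < ξ) :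
    serT i j ξ ≤ serT i' j ξ := by
  induction i', hii using Nat.le_induction with
  | base => exact le_rfl
  | succ n hn ih =>
    refine (ih (by omega)).trans ((serT_succ_le (by omega) hij hξ).trans ?_)
    refine mul_le_of_le_one_left (serT_pos (by omega) hij hξ).le ?_
    rw [div_le_one (by positivity)]
    linarith

lemma serT_lt_le {i i' j : ℕ} (hi : 1 ≤ i) (hii : i < i') (hij : i' < j) {ξ : ℝ} (hξ : 0 < ξ) :
    serT i j ξ ≤ (j : ℝ) / ξ * serT i' j ξ := by
  obtain ⟨p, rfl⟩ : ∃ p, i' = p + 1 := ⟨i' - 1, by omega⟩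
  refine (serT_mono hi (by omega : i ≤ p) (by omega) hξ).trans
    ((serT_succ_le (by omega) hij hξ).trans ?_)
  have := (serT_pos (by omega) hij hξ (i := p + 1)).le
  have h2 : (p : ℝ) ≤ j := by exact_mod_cast (by omega : p ≤ j)
  have h3 : (p : ℝ) / (p + ξ) ≤ j / ξ := by
    apply div_le_div₀ <;> first | positivity | linarith [Nat.cast_nonneg (α := ℝ) p]
  gcongr

lemma serT_anti {i j : ℕ} (hi : 1 ≤ i) (hij : i < j) {ξ : ℝ} (hξ : 1 ≤ ξ) :
    serT i j ξ ≤ serT i j 1 := by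
  unfold serT
  refine (serT_summable hi hij (by linarith)).tsum_le_tsum (fun k => ?_)
    (serT_summable hi hij one_pos)
  gcongr
  unfold momR
  refine Finset.prod_le_prod (fun l hl => by positivity) fun l hl => ?_
  gcongr

lemma momR_rec {I J : ℕ} (hI : 1 ≤ I) (hIJ : I + 2 ≤ J) {s : ℝ} (hs : 0 < s) :
    ((J : ℝ) - 1) * momR I (J - 1) s - ((J : ℝ) - 1 - I) * momR I J s - I * momR (I + 1) J s = 0 := by
  obtain ⟨p, rfl⟩ : ∃ p, J = p + 1 := ⟨J - 1, by omega⟩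
  have h1 : ∀ q, q ≤ p → momR q (p + 1) s = momR q p s * ((p : ℝ) / (p + s)) := fun q hq => by
    unfold momR
    rw [Finset.prod_Ico_succ_top hq]
  rw [Nat.add_sub_cancel, h1 I (by omega), h1 (I + 1) (by omega), momR_left (by omega : I < p)]
  push_cast
  have : (0 : ℝ) < p + s := by positivity
  have : (0 : ℝ) < I + s := by positivity
  field_simp
  ring

lemma serT_rec {I J : ℕ} (hI : 1 ≤ I) (hIJ : I + 2 ≤ J) {ξ : ℝ} (hξ : 0 < ξ) :
    ((J : ℝ) - 1) * serT I (J - 1) ξ - ((J : ℝ) - 1 - I) * serT I J ξ - I * serT (I + 1) J ξ = 0 := by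
  have h1 := (serT_summable hI (by omega : I < J - 1) hξ).hasSum.mul_left ((J : ℝ) - 1)
  have h2 := (serT_summable hI (by omega : I < J) hξ).hasSum.mul_left ((J : ℝ) - 1 - I)
  have h3 := (serT_summable (by omega) (by omega : I + 1 < J) hξ).hasSum.mul_left (I : ℝ)
  refine ((h1.sub h2).sub h3).unique ?_
  convert hasSum_zero using 2 with k
  have := momR_rec hI hIJ (s := ((k : ℝ) + 1) * ξ) (by positivity)
  linear_combination (1 / ((k : ℝ) + 1)) * this

/-- the pairing -/
noncomputable def pairT (N : ℕ) (ξ : ℝ) : (ℕ → ℕ → ℝ) →ₗ[ℝ] ℝ where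
  toFun a := ∑ i ∈ Finset.Icc 1 N, ∑ j ∈ Finset.Icc (i + 1) N, a i j * serT i j ξ
  map_add' a b := by simp [add_mul, Finset.sum_add_distrib]
  map_smul' c a := by simp [Finset.mul_sum, mul_assoc]

noncomputable def unitM (p q : ℕ) : ℕ → ℕ → ℝ := fun i j => if i = p ∧ j = q then 1 else 0

lemma pairT_unit {N p q : ℕ} (hp : 1 ≤ p) (hpq : p < q) (hq : q ≤ N) (ξ : ℝ) :
    pairT N ξ (unitM p q) = serT p q ξ := by
  simp only [pairT, unitM, LinearMap.coe_mk, AddHom.coe_mk]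
  rw [Finset.sum_eq_single p, Finset.sum_eq_single q]
  · simp
  · intro j _ hj; simp [hj]
  · intro h; exact absurd (Finset.mem_Icc.2 ⟨by omega, hq⟩) h
  · intro i _ hi; simp [hi]
  · intro h; exact absurd (Finset.mem_Icc.2 ⟨by omega, by omega⟩) h

lemma elem_eq {I J : ℕ} (hIJ : I + 2 ≤ J) :
    elemMatrix I J = ((J : ℝ) - 1) • unitM I (J - 1) - ((J : ℝ) - 1 - I) • unitM I J
      - (I : ℝ) • unitM (I + 1) J := by
  funext i j
  simp only [elemMatrix, unitM, Pi.sub_apply, Pi.smul_apply, smul_eq_mul]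
  have : J - 1 ≠ J := by omega
  by_cases h1 : i = I
  · by_cases h2 : j = J - 1
    · simp [h1, h2, this]
    · by_cases h3 : j = J <;> simp [h1, h2, h3, this.symm]
  · by_cases h2 : j = J
    · by_cases h3 : i = I + 1 <;> simp [h1, h2, h3]
    · simp [h1, h2]

lemma pairT_elem {N I J : ℕ} (hI : 1 ≤ I) (hIJ : I + 2 ≤ J) (hJ : J ≤ N) {ξ : ℝ} (hξ : 0 < ξ) :
    pairT N ξ (elemMatrix I J) = 0 := by
  rw [elem_eq hIJ, map_sub, map_sub, map_smul, map_smul, map_smul, pairT_unit hI (by omega) (by omega),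
    pairT_unit hI (by omega) (by omega), pairT_unit (by omega) (by omega) (by omega)]
  exact serT_rec hI hIJ hξ

lemma unit_mem (N d : ℕ) : ∀ p q, 1 ≤ p → p < q → q + d = N → unitM p q ∈
    Submodule.span ℝ {m : ℕ → ℕ → ℝ | ∃ I J, 1 ≤ I ∧ I + 2 ≤ J ∧ J ≤ N ∧ m = elemMatrix I J} ⊔
    Submodule.span ℝ {m : ℕ → ℕ → ℝ | ∃ p, 1 ≤ p ∧ p < N ∧ m = unitM p N} := by
  induction d with
  | zero =>
    intro p q hp hpq hq
    obtain rfl : q = N := by omega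
    exact Submodule.mem_sup_right (Submodule.subset_span ⟨p, hp, hpq, rfl⟩)
  | succ d ih =>
    intro p q hp hpq hq
    have hE := Submodule.mem_sup_left (T := Submodule.span ℝ {m : ℕ → ℕ → ℝ | ∃ p, 1 ≤ p ∧ p < N ∧ m = unitM p N})
      (Submodule.subset_span (R := ℝ) (s := {m : ℕ → ℕ → ℝ | ∃ I J, 1 ≤ I ∧ I + 2 ≤ J ∧ J ≤ N ∧ m = elemMatrix I J})
      ⟨p, q + 1, hp, by omega, by omega, rfl⟩)
    have h1 := ih p (q + 1) hp (by omega) (by omega)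
    have h2 := ih (p + 1) (q + 1) (by omega) (by omega) (by omega)
    have hq0 : (q : ℝ) ≠ 0 := by exact_mod_cast (by omega : q ≠ 0)
    have key : unitM p q = (1 / (q : ℝ)) • (elemMatrix p (q + 1) + ((q : ℝ) - p) • unitM p (q + 1)
        + (p : ℝ) • unitM (p + 1) (q + 1)) := by
      rw [elem_eq (by omega)]
      funext i j
      simp only [Pi.sub_apply, Pi.smul_apply, Pi.add_apply, smul_eq_mul, Nat.add_sub_cancel]
      push_cast
      field_simp
      ring
    rw [key]
    exact Submodule.smul_mem _ _ (add_mem (add_mem hE (Submodule.smul_mem _ _ h1)) (Submodule.smul_mem _ _ h2))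

lemma col_zero {N : ℕ} (b : ℕ → ℝ) (h : ∀ ξ : ℝ, 1 ≤ ξ → ∑ i ∈ Finset.Ico 1 N, b i * serT i N ξ = 0) :
    ∀ i ∈ Finset.Ico 1 N, b i = 0 := by
  by_contra! hc
  have hne : ((Finset.Ico 1 N).filter fun i => b i ≠ 0).Nonempty := by
    obtain ⟨i, hi, hb⟩ := hc
    exact ⟨i, Finset.mem_filter.2 ⟨hi, hb⟩⟩
  set p := Finset.max' _ hne with hp
  have hpm := Finset.mem_filter.1 (Finset.max'_mem _ hne)
  rw [← hp] at hpm
  obtain ⟨hp1, hp2⟩ := Finset.mem_Ico.1 hpm.1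
  have hmax : ∀ i ∈ Finset.Ico 1 N, p < i → b i = 0 := by
    intro i hi hpi
    by_contra hb
    have h5 : i ≤ p := Finset.le_max' _ i (Finset.mem_filter.2 ⟨hi, hb⟩)
    omega
  have hbd : ∀ ξ : ℝ, 1 ≤ ξ → |b p| * ξ ≤ (∑ i ∈ Finset.Ico 1 N, |b i|) * N := by
    intro ξ hξ
    have hξ0 : 0 < ξ := by linarith
    have hT := serT_pos hp1 hp2 hξ0
    have h1 := h ξ hξ
    rw [← Finset.add_sum_erase _ _ hpm.1] at h1
    have h2 : |b p| * serT p N ξ ≤ ∑ i ∈ (Finset.Ico 1 N).erase p, |b i| * ((N : ℝ) / ξ * serT p N ξ) := by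
      have : |b p| * serT p N ξ = |∑ i ∈ (Finset.Ico 1 N).erase p, b i * serT i N ξ| := by
        nth_rewrite 1 [← abs_of_pos hT]
        rw [← abs_mul, eq_neg_of_add_eq_zero_left h1, abs_neg]
      rw [this]
      refine (Finset.abs_sum_le_sum_abs _ _).trans (Finset.sum_le_sum fun i hi => ?_)
      obtain ⟨hip, hi⟩ := Finset.mem_erase.1 hi
      obtain ⟨hi1, hi2⟩ := Finset.mem_Ico.1 hi
      rcases lt_or_gt_of_ne hip with hlt | hgt
      · rw [abs_mul, abs_of_pos (serT_pos hi1 hi2 hξ0)]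
        gcongr
        exact serT_lt_le hi1 hlt hp2 hξ0
      · simp [hmax i hi hgt]
    have h3 : ∑ i ∈ (Finset.Ico 1 N).erase p, |b i| * ((N : ℝ) / ξ * serT p N ξ) ≤
        ∑ i ∈ (Finset.Ico 1 N), |b i| * ((N : ℝ) / ξ * serT p N ξ) :=
      Finset.sum_le_sum_of_subset_of_nonneg (Finset.erase_subset _ _) fun _ _ _ => by positivity
    have h4 := h2.trans h3
    rw [← Finset.sum_mul, ← mul_assoc, mul_le_mul_iff_left₀ hT, ← mul_div_assoc, le_div_iff₀ hξ0] at h4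
    exact h4
  have hb : 0 < |b p| := abs_pos.2 hpm.2
  set C := (∑ i ∈ Finset.Ico 1 N, |b i|) * N with hC
  have hC0 : 0 ≤ C := by positivity
  have := hbd (C / |b p| + 1) (by have : 0 ≤ C / |b p| := by positivity
                                  linarith)
  rw [mul_add, mul_div_cancel₀ _ hb.ne'] at this
  linarith

lemma algebra_part {N : ℕ} (a : ℕ → ℕ → ℝ) (ha : ∀ i j, ¬(1 ≤ i ∧ i < j ∧ j ≤ N) → a i j = 0)
    (h : ∀ ξ : ℝ, 1 ≤ ξ → pairT N ξ a = 0) :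
    a ∈ Submodule.span ℝ
      {m : ℕ → ℕ → ℝ | ∃ I J, 1 ≤ I ∧ I + 2 ≤ J ∧ J ≤ N ∧ m = elemMatrix I J} := by
  have hW : a ∈ Submodule.span ℝ
      {m : ℕ → ℕ → ℝ | ∃ I J, 1 ≤ I ∧ I + 2 ≤ J ∧ J ≤ N ∧ m = elemMatrix I J} ⊔
    Submodule.span ℝ {m : ℕ → ℕ → ℝ | ∃ p, 1 ≤ p ∧ p < N ∧ m = unitM p N} := by
    have : a = ∑ i ∈ Finset.Icc 1 N, ∑ j ∈ Finset.Icc (i + 1) N, a i j • unitM i j := by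
      funext p q
      simp only [Finset.sum_apply, Pi.smul_apply, smul_eq_mul, unitM]
      by_cases hpq : 1 ≤ p ∧ p < q ∧ q ≤ N
      · rw [Finset.sum_eq_single p, Finset.sum_eq_single q]
        · simp
        · intro j _ hj; simp [hj.symm]
        · intro h; exact absurd (Finset.mem_Icc.2 ⟨by omega, by omega⟩) h
        · intro i _ hi; simp [hi.symm]
        · intro h; exact absurd (Finset.mem_Icc.2 ⟨by omega, by omega⟩) h
      · rw [ha p q hpq]
        symm
        refine Finset.sum_eq_zero fun i hi => Finset.sum_eq_zero fun j hj => ?_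
        rw [Finset.mem_Icc] at hi hj
        rw [if_neg (by rintro ⟨rfl, rfl⟩; exact hpq ⟨by omega, by omega, by omega⟩), mul_zero]
    rw [this]
    refine sum_mem fun i hi => sum_mem fun j hj => Submodule.smul_mem _ _ ?_
    rw [Finset.mem_Icc] at hi hj
    exact unit_mem N (N - j) i j hi.1 (by omega) (by omega)
  obtain ⟨x, hx, y, hy, rfl⟩ := Submodule.mem_sup.1 hW
  have hxz : ∀ ξ : ℝ, 1 ≤ ξ → pairT N ξ x = 0 := by
    intro ξ hξ
    have : Submodule.span ℝ {m : ℕ → ℕ → ℝ | ∃ I J, 1 ≤ I ∧ I + 2 ≤ J ∧ J ≤ N ∧ m = elemMatrix I J}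
        ≤ LinearMap.ker (pairT N ξ) := by
      rw [Submodule.span_le]
      rintro m ⟨I, J, hI, hIJ, hJ, rfl⟩
      exact pairT_elem hI hIJ hJ (by linarith)
    exact this hx
  have hyf : ∃ b : ℕ → ℝ, y = ∑ p ∈ Finset.Ico 1 N, b p • unitM p N := by
    clear hW h ha hxz
    induction hy using Submodule.span_induction with
    | mem m hm =>
      obtain ⟨p, hp1, hp2, rfl⟩ := hm
      refine ⟨fun q => if q = p then 1 else 0, ?_⟩
      rw [Finset.sum_eq_single p]
      · simp
      · intro q _ hq; simp [hq]
      · intro h; exact absurd (Finset.mem_Ico.2 ⟨hp1, hp2⟩) h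
    | zero => exact ⟨0, by simp⟩
    | add u v _ _ hu hv =>
      obtain ⟨b, rfl⟩ := hu
      obtain ⟨c, rfl⟩ := hv
      exact ⟨b + c, by simp [add_smul, Finset.sum_add_distrib]⟩
    | smul r u _ hu =>
      obtain ⟨b, rfl⟩ := hu
      exact ⟨r • b, by simp [Finset.smul_sum, mul_smul]⟩
  obtain ⟨b, rfl⟩ := hyf
  have hb := col_zero (N := N) b fun ξ hξ => by
    have h1 := h ξ hξ
    rw [map_add, hxz ξ hξ, zero_add, map_sum] at h1
    rw [← h1]
    refine Finset.sum_congr rfl fun i hi => ?_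
    rw [Finset.mem_Ico] at hi
    rw [map_smul, pairT_unit hi.1 hi.2 le_rfl, smul_eq_mul]
  have : ∑ p ∈ Finset.Ico 1 N, b p • unitM p N = 0 :=
    Finset.sum_eq_zero fun i hi => by rw [hb i hi, zero_smul]
  rw [this, add_zero]
  exact hx

/-- scaled simplex -/
def simpT (n : ℕ) (t : ℝ) : Set (Fin n → ℝ) :=
  {g | StrictMono g ∧ ∀ i, 0 < g i ∧ g i < t}

lemma measurableSet_simpT_prod (n : ℕ) :
    MeasurableSet {p : ℝ × (Fin n → ℝ) | p.2 ∈ simpT n p.1} := by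
  have : {p : ℝ × (Fin n → ℝ) | p.2 ∈ simpT n p.1} =
      (⋂ (i : Fin n) (j : Fin n) (_ : i < j), {p | p.2 i < p.2 j}) ∩
      ⋂ i : Fin n, ({p | 0 < p.2 i} ∩ {p | p.2 i < p.1}) := by
    ext p
    simp [simpT, StrictMono]
  rw [this]
  refine MeasurableSet.inter ?_ ?_
  · refine MeasurableSet.iInter fun i => MeasurableSet.iInter fun j => MeasurableSet.iInter fun _ => ?_
    exact measurableSet_lt (by fun_prop) (by fun_prop)
  · refine MeasurableSet.iInter fun i => MeasurableSet.inter ?_ ?_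
    · exact measurableSet_lt (by fun_prop) (by fun_prop)
    · exact measurableSet_lt (by fun_prop) (by fun_prop)

lemma measurableSet_simpT (n : ℕ) (t : ℝ) : MeasurableSet (simpT n t) :=
  (measurable_prodMk_left (x := t)) (measurableSet_simpT_prod n)

lemma snoc_mem_simpT {n : ℕ} {t : ℝ} (x : ℝ) (h : Fin n → ℝ) :
    (Fin.snoc h x : Fin (n + 1) → ℝ) ∈ simpT (n + 1) t ↔ (0 < x ∧ x < t) ∧ h ∈ simpT n x := by
  constructor
  · rintro ⟨h1, h2⟩
    have hx := h2 (Fin.last n)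
    rw [Fin.snoc_last] at hx
    refine ⟨hx, ?_, fun i => ⟨?_, ?_⟩⟩
    · intro i j hij
      have := h1 (Fin.castSucc_lt_castSucc_iff.2 hij)
      simpa [Fin.snoc_castSucc] using this
    · have := (h2 i.castSucc).1
      simpa using this
    · have := h1 (Fin.castSucc_lt_last i)
      simpa using this
  · rintro ⟨⟨hx0, hxt⟩, h1, h2⟩
    refine ⟨?_, ?_⟩
    · intro i j hij
      induction j using Fin.lastCases with
      | last =>
        induction i using Fin.lastCases with
        | last => exact absurd hij (lt_irrefl _)
        | cast i => simpa using (h2 i).2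
      | cast j =>
        induction i using Fin.lastCases with
        | last => exact absurd hij (not_lt.2 (Fin.le_last _))
        | cast i => simpa using h1 (Fin.castSucc_lt_castSucc_iff.1 hij)
    · intro i
      induction i using Fin.lastCases with
      | last => simpa using ⟨hx0, hxt⟩
      | cast i => simpa using ⟨(h2 i).1, (h2 i).2.trans hxt⟩

lemma lintegral_rpow_Ioo {t p : ℝ} (ht : 0 < t) (hp : -1 < p) :
    ∫⁻ x in Ioo 0 t, ENNReal.ofReal (x ^ p) = ENNReal.ofReal (t ^ (p + 1) / (p + 1)) := by
  rw [← ofReal_integral_eq_lintegral_ofReal]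
  · congr 1
    rw [← integral_Ioc_eq_integral_Ioo, ← intervalIntegral.integral_of_le ht.le,
      integral_rpow (Or.inl hp), Real.zero_rpow (by linarith), sub_zero]
  · exact (intervalIntegral.integrableOn_Ioo_rpow_iff ht).2 hp
  · refine (ae_restrict_iff' measurableSet_Ioo).2 (Filter.Eventually.of_forall fun x hx => ?_)
    exact Real.rpow_nonneg hx.1.le _

lemma lintegral_simpT (e : ℕ → ℝ) (n : ℕ) :
    (∀ k < n, 0 < (k : ℝ) + 1 + ∑ l ∈ Finset.range (k + 1), e l) → ∀ t : ℝ, 0 < t →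
    ∫⁻ g in simpT n t, ENNReal.ofReal (∏ k : Fin n, g k ^ e k) =
      ENNReal.ofReal (t ^ ((n : ℝ) + ∑ l ∈ Finset.range n, e l) *
        ∏ k ∈ Finset.range n, (1 / ((k : ℝ) + 1 + ∑ l ∈ Finset.range (k + 1), e l))) := by
  induction n with
  | zero =>
    intro _ t ht
    have : simpT 0 t = univ := by
      ext g
      simp [simpT, StrictMono]
    simp [this, MeasureTheory.volume_pi]
  | succ n ih =>
    intro he t ht
    have ih' := ih fun k hk => he k (by omega)
    have hn := he n (by omega)
    set C := ∏ k ∈ Finset.range n, (1 / ((k : ℝ) + 1 + ∑ l ∈ Finset.range (k + 1), e l)) with hC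
    set S := ∑ l ∈ Finset.range n, e l with hS
    rw [Finset.sum_range_succ, ← hS] at hn
    have hC0 : 0 ≤ C := Finset.prod_nonneg fun k hk =>
      (one_div_pos.2 (he k (by have := Finset.mem_range.1 hk; omega))).le
    have hmp := (volume_preserving_piFinSuccAbove (fun _ : Fin (n + 1) => ℝ) (Fin.last n)).symm
    rw [← lintegral_indicator (measurableSet_simpT _ _), ← hmp.lintegral_comp_emb
      (MeasurableEquiv.measurableEmbedding _)]
    have hmeas : Measurable fun p : ℝ × (Fin n → ℝ) => 
      (Ioo 0 t).indicator (fun x => ENNReal.ofReal (x ^ e n)) p.1 *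
        ({p : ℝ × (Fin n → ℝ) | p.2 ∈ simpT n p.1}).indicator
          (fun p => ENNReal.ofReal (∏ k : Fin n, p.2 k ^ e k)) p := by
      refine Measurable.mul ?_ ?_
      · refine Measurable.comp (g := (Ioo 0 t).indicator (fun x => ENNReal.ofReal (x ^ e n))) ?_ measurable_fst
        exact Measurable.indicator (by fun_prop) measurableSet_Ioo
      · exact Measurable.indicator (by fun_prop) (measurableSet_simpT_prod n)
    have hpt : ∀ p : ℝ × (Fin n → ℝ),
        (simpT (n + 1) t).indicator (fun g => ENNReal.ofReal (∏ k : Fin (n + 1), g k ^ e k))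
          ((MeasurableEquiv.piFinSuccAbove (fun _ : Fin (n + 1) => ℝ) (Fin.last n)).symm p) =
        (Ioo 0 t).indicator (fun x => ENNReal.ofReal (x ^ e n)) p.1 *
        ({p : ℝ × (Fin n → ℝ) | p.2 ∈ simpT n p.1}).indicator
          (fun p => ENNReal.ofReal (∏ k : Fin n, p.2 k ^ e k)) p := by
      rintro ⟨x, h⟩
      have : (MeasurableEquiv.piFinSuccAbove (fun _ : Fin (n + 1) => ℝ) (Fin.last n)).symm (x, h) =
          (Fin.snoc h x : Fin (n + 1) → ℝ) := by
        rw [← Fin.insertNth_last']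
        rfl
      rw [this]
      by_cases hx : x ∈ Ioo 0 t
      · by_cases hh : h ∈ simpT n x
        · rw [indicator_of_mem ((snoc_mem_simpT x h).2 ⟨hx, hh⟩), indicator_of_mem hx,
            indicator_of_mem (by exact hh), ← ENNReal.ofReal_mul (Real.rpow_nonneg hx.1.le _),
            Fin.prod_univ_castSucc]
          simp [mul_comm]
        · rw [indicator_of_notMem (fun hc => hh ((snoc_mem_simpT x h).1 hc).2),
            indicator_of_notMem (s := {p : ℝ × (Fin n → ℝ) | p.2 ∈ simpT n p.1}) (by exact hh), mul_zero]
      · rw [indicator_of_notMem (fun hc => hx ((snoc_mem_simpT x h).1 hc).1),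
            indicator_of_notMem hx, zero_mul]
    rw [lintegral_congr hpt]
    change ∫⁻ p, _ ∂(volume.prod volume) = _
    rw [lintegral_prod _ hmeas.aemeasurable]
    have hin : ∀ x : ℝ, ∫⁻ h : Fin n → ℝ, (Ioo 0 t).indicator (fun x => ENNReal.ofReal (x ^ e n)) x *
        ({p : ℝ × (Fin n → ℝ) | p.2 ∈ simpT n p.1}).indicator
          (fun p => ENNReal.ofReal (∏ k : Fin n, p.2 k ^ e k)) (x, h) =
        (Ioo 0 t).indicator (fun x => ENNReal.ofReal C * ENNReal.ofReal (x ^ ((n : ℝ) + S + e n))) x := by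
      intro x
      by_cases hx : x ∈ Ioo 0 t
      · rw [indicator_of_mem hx, indicator_of_mem hx, lintegral_const_mul' _ _ ENNReal.ofReal_ne_top]
        have h1 := ih' x hx.1
        rw [← lintegral_indicator (measurableSet_simpT _ _)] at h1
        change _ * ∫⁻ h, (simpT n x).indicator (fun g => ENNReal.ofReal (∏ k : Fin n, g k ^ e k)) h = _
        rw [h1, ← ENNReal.ofReal_mul (Real.rpow_nonneg hx.1.le _), ← ENNReal.ofReal_mul hC0,
          Real.rpow_add hx.1 (n + S)]
        congr 1
        ring
      · rw [indicator_of_notMem hx, indicator_of_notMem hx]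
        simp
    rw [lintegral_congr hin, lintegral_indicator measurableSet_Ioo,
      lintegral_const_mul' _ _ ENNReal.ofReal_ne_top, lintegral_rpow_Ioo ht (by linarith),
      ← ENNReal.ofReal_mul hC0, Finset.prod_range_succ, ← hC, Finset.sum_range_succ, ← hS]
    congr 1
    rw [Nat.cast_succ, show (n : ℝ) + S + e n + 1 = n + 1 + (S + e n) by ring]
    ring

lemma momR_prod {N i j : ℕ} (hi : 1 ≤ i) (hjN : j ≤ N) (s : ℝ) :
    ∏ k ∈ Finset.range N, (1 / ((k : ℝ) + 1 + if i ≤ k + 1 ∧ k + 1 < j then s else 0)) =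
      momR i j s / N.factorial := by
  have h1 : momR i j s = ∏ k ∈ Finset.range N,
      if i ≤ k + 1 ∧ k + 1 < j then ((k : ℝ) + 1) / ((k : ℝ) + 1 + s) else 1 := by
    unfold momR
    rw [← Finset.prod_filter]
    symm
    refine Finset.prod_bij (fun k _ => k + 1) ?_ ?_ ?_ ?_
    · intro k hk
      simp only [Finset.mem_filter] at hk
      exact Finset.mem_Ico.2 hk.2
    · intro k _ l _ h
      omega
    · intro l hl
      rw [Finset.mem_Ico] at hl
      refine ⟨l - 1, ?_, by omega⟩
      simp only [Finset.mem_filter, Finset.mem_range]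
      omega
    · intro k _
      push_cast
      rfl
  have h2 : (N.factorial : ℝ) = ∏ k ∈ Finset.range N, ((k : ℝ) + 1) := by
    rw [← Finset.prod_range_add_one_eq_factorial]
    push_cast
    rfl
  rw [h1, h2, ← Finset.prod_div_distrib]
  refine Finset.prod_congr rfl fun k _ => ?_
  have : (k : ℝ) + 1 ≠ 0 := by positivity
  split_ifs
  · rw [div_right_comm, div_self this]
  · simp

lemma moment {N i j : ℕ} (hi : 1 ≤ i) (hij : i < j) (hjN : j ≤ N) {s : ℝ} (hs : 0 < s) :
    IntegrableOn (fun g : Fin N → ℝ => (g ⟨i - 1, by omega⟩ / g ⟨j - 1, by omega⟩) ^ s) (simplex N) ∧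
    ∫ g in simplex N, (g ⟨i - 1, by omega⟩ / g ⟨j - 1, by omega⟩) ^ s =
      momR i j s / N.factorial := by
  have hS : MeasurableSet (simplex N) := measurableSet_simpT N 1
  set e : ℕ → ℝ := fun l => (if l = i - 1 then s else 0) - (if l = j - 1 then s else 0) with he
  have hsum : ∀ k, ∑ l ∈ Finset.range (k + 1), e l = if i ≤ k + 1 ∧ k + 1 < j then s else 0 := by
    intro k
    simp only [he, Finset.sum_sub_distrib, Finset.sum_ite_eq', Finset.mem_range]
    split_ifs <;> first | omega | simp
  have h := lintegral_simpT e N (fun k _ => by rw [hsum]; split_ifs <;> positivity) 1 one_pos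
  simp_rw [hsum] at h
  rw [Real.one_rpow, one_mul, momR_prod hi hjN] at h
  have hpt : ∀ g ∈ simplex N, (∏ k : Fin N, g k ^ e k) = (g ⟨i - 1, by omega⟩ / g ⟨j - 1, by omega⟩) ^ s := by
    rintro g ⟨_, hg⟩
    have : ∀ k : Fin N, g k ^ e k =
        g k ^ (if (k : ℕ) = i - 1 then s else 0) / g k ^ (if (k : ℕ) = j - 1 then s else 0) :=
      fun k => Real.rpow_sub (hg k).1 _ _
    rw [Finset.prod_congr rfl fun k _ => this k, Finset.prod_div_distrib,
      Finset.prod_eq_single ⟨i - 1, by omega⟩, Finset.prod_eq_single ⟨j - 1, by omega⟩,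
      if_pos rfl, if_pos rfl, Real.div_rpow (hg _).1.le (hg _).1.le]
    · intro k _ hk
      rw [if_neg (fun hc => hk (Fin.ext hc)), Real.rpow_zero]
    · simp
    · intro k _ hk
      rw [if_neg (fun hc => hk (Fin.ext hc)), Real.rpow_zero]
    · simp
  have h' : ∫⁻ g in simplex N, ENNReal.ofReal ((g ⟨i - 1, by omega⟩ / g ⟨j - 1, by omega⟩) ^ s) =
      ENNReal.ofReal (momR i j s / N.factorial) := by
    rw [← h]
    exact setLIntegral_congr_fun hS fun g hg => by simp only [hpt g hg]
  have hnn : 0 ≤ᵐ[volume.restrict (simplex N)]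
      fun g : Fin N → ℝ => (g ⟨i - 1, by omega⟩ / g ⟨j - 1, by omega⟩) ^ s := by
    refine (ae_restrict_iff' hS).2 (Filter.Eventually.of_forall fun g hg => ?_)
    exact Real.rpow_nonneg (div_nonneg (hg.2 _).1.le (hg.2 _).1.le) _
  have hm : AEStronglyMeasurable
      (fun g : Fin N → ℝ => (g ⟨i - 1, by omega⟩ / g ⟨j - 1, by omega⟩) ^ s)
      (volume.restrict (simplex N)) := by
    apply Measurable.aestronglyMeasurable
    fun_prop
  refine ⟨⟨hm, ?_⟩, ?_⟩
  · rw [hasFiniteIntegral_iff_ofReal hnn, h']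
    exact ENNReal.ofReal_lt_top
  · rw [integral_eq_lintegral_of_nonneg_ae hnn hm, h', ENNReal.toReal_ofReal]
    have := (momR_pos (j := j) hi hs).le
    positivity

lemma log_moment {N i j : ℕ} (hi : 1 ≤ i) (hij : i < j) (hjN : j ≤ N) {ξ : ℝ} (hξ : 0 < ξ) :
    IntegrableOn (fun g : Fin N → ℝ =>
      Real.log (1 - (g ⟨i - 1, by omega⟩ / g ⟨j - 1, by omega⟩) ^ ξ)) (simplex N) ∧
    ∫ g in simplex N, Real.log (1 - (g ⟨i - 1, by omega⟩ / g ⟨j - 1, by omega⟩) ^ ξ) =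
      - (serT i j ξ / N.factorial) := by
  have hS : MeasurableSet (simplex N) := measurableSet_simpT N 1
  have hm := fun k : ℕ => moment hi hij hjN (s := ((k : ℝ) + 1) * ξ) (by positivity)
  have hk : ∀ k : ℕ, ∫ g in simplex N, (1 / ((k : ℝ) + 1)) *
      ((g ⟨i - 1, by omega⟩ / g ⟨j - 1, by omega⟩) ^ (((k : ℝ) + 1) * ξ)) =
      (1 / ((k : ℝ) + 1)) * momR i j (((k : ℝ) + 1) * ξ) / N.factorial := fun k => by
    rw [integral_const_mul, (hm k).2, mul_div_assoc]
  have hsum := hasSum_integral_of_summable_integral_norm (μ := volume.restrict (simplex N))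
    (F := fun (k : ℕ) (g : Fin N → ℝ) => (1 / ((k : ℝ) + 1)) *
      ((g ⟨i - 1, by omega⟩ / g ⟨j - 1, by omega⟩) ^ (((k : ℝ) + 1) * ξ)))
    (fun k => (hm k).1.const_mul _) (by
      have := (serT_summable hi hij hξ).div_const (N.factorial : ℝ)
      refine this.congr fun k => ?_
      rw [← hk k]
      refine setIntegral_congr_fun hS fun g hg => ?_
      refine (Real.norm_of_nonneg ?_).symm
      exact mul_nonneg (by positivity) (Real.rpow_nonneg (div_nonneg (hg.2 _).1.le (hg.2 _).1.le) _))
  simp_rw [hk] at hsum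
  have hval := hsum.unique ((serT_summable hi hij hξ).hasSum.div_const (N.factorial : ℝ))
  have hlog : ∫ g in simplex N, Real.log (1 - (g ⟨i - 1, by omega⟩ / g ⟨j - 1, by omega⟩) ^ ξ) =
      - (serT i j ξ / N.factorial) := by
    rw [serT, ← hval, ← integral_neg]
    refine setIntegral_congr_fun hS fun g hg => ?_
    have hp := (hg.2 ⟨i - 1, by omega⟩).1
    have hq := (hg.2 ⟨j - 1, by omega⟩).1
    have hpq : g ⟨i - 1, by omega⟩ < g ⟨j - 1, by omega⟩ :=
      hg.1 (Fin.mk_lt_mk.2 (by omega))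
    set x := g ⟨i - 1, by omega⟩ / g ⟨j - 1, by omega⟩ with hx
    have hx0 : 0 < x := div_pos hp hq
    have hx1 : x < 1 := (div_lt_one hq).2 hpq
    have hxx : |x ^ ξ| < 1 := by
      rw [abs_of_pos (Real.rpow_pos_of_pos hx0 _)]
      exact Real.rpow_lt_one hx0.le hx1 hξ
    have h1 := hasSum_pow_div_log_of_abs_lt_one hxx
    rw [eq_neg_iff_add_eq_zero, add_comm, ← eq_neg_iff_add_eq_zero, ← h1.tsum_eq]
    refine tsum_congr fun k => ?_
    rw [← Real.rpow_natCast, ← Real.rpow_mul hx0.le]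
    push_cast
    rw [mul_comm ξ]
    ring
  refine ⟨Integrable.of_integral_ne_zero ?_, hlog⟩
  rw [hlog]
  have := serT_pos hi hij hξ
  exact neg_ne_zero.2 (by positivity)

lemma log_gap {μ σ ξ x y : ℝ} (hσ : 0 < σ) (hξ : 0 < ξ) (hx : 0 < x) (hxy : x < y) :
    Real.log (gpdQ μ σ ξ x - gpdQ μ σ ξ y) =
      Real.log (σ / ξ) + -ξ * Real.log x + Real.log (1 - (x / y) ^ ξ) := by
  have hy : 0 < y := hx.trans hxy
  have h1 : 0 < 1 - (x / y) ^ ξ := by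
    have := Real.rpow_lt_one (div_pos hx hy).le ((div_lt_one hy).2 hxy) hξ
    linarith
  have h2 : gpdQ μ σ ξ x - gpdQ μ σ ξ y = σ / ξ * x ^ (-ξ) * (1 - (x / y) ^ ξ) := by
    simp only [gpdQ, hξ.ne', if_false]
    rw [Real.div_rpow hx.le hy.le, Real.rpow_neg hx.le, Real.rpow_neg hy.le]
    have := (Real.rpow_pos_of_pos hx ξ).ne'
    have := (Real.rpow_pos_of_pos hy ξ).ne'
    field_simp
    ring
  have h3 := Real.rpow_pos_of_pos hx (-ξ)
  have h4 : 0 < σ / ξ := by positivity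
  rw [h2, Real.log_mul (by positivity) h1.ne', Real.log_mul h4.ne' h3.ne', Real.log_rpow hx]

/-- Completeness: every location- and scale-invariant, absolutely unbiased estimator of
the GPD tail parameter that is a linear combination of log-spacings is a linear
combination of elementals. -/
theorem elementals_complete (N : ℕ) (hN : 3 ≤ N) (μ σ : ℝ) (hσ : 0 < σ)
    (a : ℕ → ℕ → ℝ) (ha : ∀ i j, ¬(1 ≤ i ∧ i < j ∧ j ≤ N) → a i j = 0)
    (ha0 : ∑ i ∈ Finset.Icc 1 N, ∑ j ∈ Finset.Icc (i + 1) N, a i j = 0)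
    (hunbiased : ∀ ξ : ℝ, ξ ≠ 0 →
      IntegrableOn
        (fun g => ∑ i ∈ Finset.Icc 1 N, ∑ j ∈ Finset.Icc (i + 1) N,
          a i j * Real.log (sample N (gpdQ μ σ ξ) g i - sample N (gpdQ μ σ ξ) g j))
        (simplex N) volume ∧
      (N.factorial : ℝ) *
        ∫ g in simplex N, ∑ i ∈ Finset.Icc 1 N, ∑ j ∈ Finset.Icc (i + 1) N,
          a i j * Real.log (sample N (gpdQ μ σ ξ) g i - sample N (gpdQ μ σ ξ) g j) = ξ) :
    a ∈ Submodule.span ℝ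
      {m : ℕ → ℕ → ℝ | ∃ I J, 1 ≤ I ∧ I + 2 ≤ J ∧ J ≤ N ∧ m = elemMatrix I J} := by
  have hS : MeasurableSet (simplex N) := measurableSet_simpT N 1
  set R : ℝ → (Fin N → ℝ) → ℝ := fun ξ g => ∑ i ∈ Finset.Icc 1 N, ∑ j ∈ Finset.Icc (i + 1) N,
    a i j * Real.log (1 - (sample N id g i / sample N id g j) ^ ξ) with hR
  set L : (Fin N → ℝ) → ℝ := fun g => ∑ i ∈ Finset.Icc 1 N, ∑ j ∈ Finset.Icc (i + 1) N,
    a i j * Real.log (sample N id g i) with hL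
  have hterm : ∀ ξ : ℝ, 0 < ξ → ∀ i ∈ Finset.Icc 1 N, ∀ j ∈ Finset.Icc (i + 1) N,
      IntegrableOn (fun g => a i j * Real.log (1 - (sample N id g i / sample N id g j) ^ ξ)) (simplex N)
      ∧ ∫ g in simplex N, a i j * Real.log (1 - (sample N id g i / sample N id g j) ^ ξ) =
        - (a i j * serT i j ξ / N.factorial) := by
    intro ξ hξ i hi j hj
    rw [Finset.mem_Icc] at hi hj
    have h := log_moment hi.1 (by omega : i < j) hj.2 hξ
    have e1 : ∀ g : Fin N → ℝ, sample N id g i = g ⟨i - 1, by omega⟩ := fun g => by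
      simp [sample, show i - 1 < N by omega]
    have e2 : ∀ g : Fin N → ℝ, sample N id g j = g ⟨j - 1, by omega⟩ := fun g => by
      simp [sample, show j - 1 < N by omega]
    simp_rw [e1, e2]
    refine ⟨h.1.const_mul _, ?_⟩
    rw [integral_const_mul, h.2]
    ring
  have hRint : ∀ ξ : ℝ, 0 < ξ → IntegrableOn (R ξ) (simplex N) ∧
      ∫ g in simplex N, R ξ g = - (pairT N ξ a / N.factorial) := by
    intro ξ hξ
    refine ⟨integrable_finsetSum _ fun i hi => integrable_finsetSum _ fun j hj =>
      (hterm ξ hξ i hi j hj).1, ?_⟩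
    simp only [hR]
    rw [integral_finsetSum _ fun i hi => integrable_finsetSum _ fun j hj => (hterm ξ hξ i hi j hj).1]
    simp only [pairT, LinearMap.coe_mk, AddHom.coe_mk]
    rw [Finset.sum_div, ← Finset.sum_neg_distrib]
    refine Finset.sum_congr rfl fun i hi => ?_
    rw [integral_finsetSum _ fun j hj => (hterm ξ hξ i hi j hj).1, Finset.sum_div,
      ← Finset.sum_neg_distrib]
    exact Finset.sum_congr rfl fun j hj => (hterm ξ hξ i hi j hj).2
  have hdec : ∀ ξ : ℝ, 0 < ξ → ∀ g ∈ simplex N,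
      ∑ i ∈ Finset.Icc 1 N, ∑ j ∈ Finset.Icc (i + 1) N,
          a i j * Real.log (sample N (gpdQ μ σ ξ) g i - sample N (gpdQ μ σ ξ) g j) =
      -ξ * L g + R ξ g := by
    intro ξ hξ g hg
    have : ∑ i ∈ Finset.Icc 1 N, ∑ j ∈ Finset.Icc (i + 1) N,
          a i j * Real.log (sample N (gpdQ μ σ ξ) g i - sample N (gpdQ μ σ ξ) g j) =
        (∑ i ∈ Finset.Icc 1 N, ∑ j ∈ Finset.Icc (i + 1) N, a i j) * Real.log (σ / ξ)
          + -ξ * L g + R ξ g := by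
      simp only [hL, hR, Finset.sum_mul, Finset.mul_sum, ← Finset.sum_add_distrib]
      refine Finset.sum_congr rfl fun i hi => Finset.sum_congr rfl fun j hj => ?_
      rw [Finset.mem_Icc] at hi hj
      have hi' : i - 1 < N := by omega
      have hj' : j - 1 < N := by omega
      simp only [sample, hi', hj', dif_pos, id]
      rw [log_gap hσ hξ (hg.2 _).1 (hg.1 (Fin.mk_lt_mk.2 (by omega)))]
      ring
    rw [this, ha0]
    ring
  set K := (N.factorial : ℝ) * ∫ g in simplex N, L g with hK
  have hfac : (N.factorial : ℝ) ≠ 0 := by positivity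
  have hmain : ∀ ξ : ℝ, 0 < ξ → pairT N ξ a = -(K + 1) * ξ := by
    intro ξ hξ
    obtain ⟨h1, h2⟩ := hunbiased ξ hξ.ne'
    obtain ⟨h3, h4⟩ := hRint ξ hξ
    have h5 : IntegrableOn (fun g => -ξ * L g) (simplex N) := by
      refine (h1.sub h3).congr_fun (fun g hg => ?_) hS
      simp only [Pi.sub_apply]
      rw [hdec ξ hξ g hg]
      ring
    rw [setIntegral_congr_fun hS (hdec ξ hξ), integral_add h5 h3, h4, integral_const_mul] at h2
    have : (N.factorial : ℝ) * (pairT N ξ a / N.factorial) = pairT N ξ a := by field_simp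
    linear_combination -this - h2
  set C := ∑ i ∈ Finset.Icc 1 N, ∑ j ∈ Finset.Icc (i + 1) N, |a i j| * serT i j 1 with hC
  have hbd : ∀ ξ : ℝ, 1 ≤ ξ → |K + 1| * ξ ≤ C := by
    intro ξ hξ
    have h0 : 0 < ξ := by linarith
    have : |K + 1| * ξ = |pairT N ξ a| := by
      rw [hmain ξ h0, abs_mul, abs_neg, abs_of_pos h0]
    rw [this]
    simp only [pairT, LinearMap.coe_mk, AddHom.coe_mk]
    refine (Finset.abs_sum_le_sum_abs _ _).trans (Finset.sum_le_sum fun i hi => ?_)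
    refine (Finset.abs_sum_le_sum_abs _ _).trans (Finset.sum_le_sum fun j hj => ?_)
    rw [Finset.mem_Icc] at hi hj
    rw [abs_mul, abs_of_pos (serT_pos hi.1 (by omega) h0)]
    gcongr
    exact serT_anti hi.1 (by omega) hξ
  have hK1 : K + 1 = 0 := by
    by_contra hne
    have hpos : 0 < |K + 1| := abs_pos.2 hne
    have hC0 : 0 ≤ C := le_trans (by positivity) (hbd 1 le_rfl)
    have h1 := hbd (C / |K + 1| + 1) (by
      have : 0 ≤ C / |K + 1| := by positivity
      linarith)
    rw [mul_add, mul_div_cancel₀ _ hpos.ne'] at h1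
    linarith
  refine algebra_part a ha fun ξ hξ => ?_
  rw [hmain ξ (by linarith), hK1]
  simp
end

section
/- Let N ≥ 3. Then ∑_{J=3}^{N} (J−2)(N+1−J) = N(N−1)(N−2)/6. Moreover, setting r_{IJ} = 6(N+1−J)/(N(N−1)(N−2)) for each pair (I,J) with 1 ≤ I and I+2 ≤ J ≤ N (so that ∑_{I,J} r_{IJ} = 1), the matrix A = ∑_{I,J} r_{IJ}·E^{(I,J)} has entries A_{ij} = 6(2N − 3j + 2)/(N(N−1)(N−2)) for every 1 ≤ i < j ≤ N, and A_{ij} = 0 otherwise; in particular ∑_{1 ≤ i < j ≤ N} A_{ij} = 0. -/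
lemma aux_arith (a b : ℝ) (k M : ℕ) (h : k ≤ M + 1) :
    ∑ J ∈ Finset.Icc k M, (a - b * (J : ℝ)) =
      ((M : ℝ) + 1 - k) * (2 * a - b * ((M : ℝ) + k)) / 2 := by
  obtain ⟨d, hd⟩ := Nat.exists_eq_add_of_le h
  induction d generalizing M with
  | zero =>
    have : (M : ℝ) + 1 = k := by exact_mod_cast hd
    rw [Finset.Icc_eq_empty (by omega), this]; simp
  | succ d ih =>
    obtain rfl : M = k + d := by omega
    rcases Nat.eq_zero_or_pos (k + d) with h0 | h0
    · obtain rfl : k = 0 := by omega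
      obtain rfl : d = 0 := by omega
      simp
    · obtain ⟨m, hm⟩ := Nat.exists_eq_succ_of_ne_zero h0.ne'
      have := ih m (by omega) (by omega)
      rw [hm, Nat.succ_eq_add_one, Finset.sum_Icc_succ_top (by omega), this]
      push_cast; ring

lemma aux_one (a : ℝ) (m : ℕ) :
    ∑ J ∈ Finset.Icc 3 (m + 2), ((J : ℝ) - 2) * (a + 1 - J) =
      (m : ℝ) * (m + 1) / 2 * (a - 1) - (m : ℝ) * (m + 1) * (2 * m + 1) / 6 := by
  induction m with
  | zero => simp
  | succ m ih =>
    rw [show m + 1 + 2 = (m + 2) + 1 by ring, Finset.sum_Icc_succ_top (by omega), ih]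
    push_cast; ring

lemma aux_quad (a b c : ℝ) (M : ℕ) :
    ∑ i ∈ Finset.Icc 1 M, (a + b * (i : ℝ) + c * (i : ℝ) ^ 2) =
      a * M + b * (M * (M + 1) / 2) + c * (M * (M + 1) * (2 * M + 1) / 6) := by
  induction M with
  | zero => simp
  | succ m ih =>
    rw [Finset.sum_Icc_succ_top (by omega), ih]
    push_cast; ring

lemma aux_elem (I J i j : ℕ) (h : I + 2 ≤ J) :
    elemMatrix I J i j =
      (if J = j + 1 then (if I = i then (j : ℝ) else 0) else 0) +
      (if J = j then (if I = i then -((j : ℝ) - 1 - i) else 0) else 0) +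
      (if J = j then (if I + 1 = i then -((i : ℝ) - 1) else 0) else 0) := by
  unfold elemMatrix
  by_cases h1 : J = j + 1
  · subst h1
    by_cases h2 : I = i
    · subst h2; simp
    · have : i ≠ I := fun h => h2 h.symm
      simp [h2, this]
  · have h1' : j ≠ J - 1 := by omega
    by_cases h3 : J = j
    · subst h3
      by_cases h2 : I = i
      · subst h2; simp [h1']
      · have : i ≠ I := fun h => h2 h.symm
        by_cases h4 : I + 1 = i
        · subst h4; simp [h1']
        · have h4' : i ≠ I + 1 := fun h => h4 h.symm
          simp [h1', h2, this, h4, h4']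
    · have : j ≠ J := fun h => h3 h.symm
      simp [h1, h1', h3, this]

lemma aux_entry (N : ℕ) (D : ℝ) (i j : ℕ) :
    (∑ I ∈ Finset.Icc 1 N, ∑ J ∈ Finset.Icc (I + 2) N,
          (6 * ((N : ℝ) + 1 - (J : ℝ)) / D) • elemMatrix I J) i j =
        if 1 ≤ i ∧ i < j ∧ j ≤ N then
          6 * (2 * (N : ℝ) - 3 * (j : ℝ) + 2) / D
        else 0 := by
  have e : (∑ I ∈ Finset.Icc 1 N, ∑ J ∈ Finset.Icc (I + 2) N,
          (6 * ((N : ℝ) + 1 - (J : ℝ)) / D) • elemMatrix I J) i j =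
      ∑ I ∈ Finset.Icc 1 N,
        ((if I = i then (if I + 2 ≤ j + 1 ∧ j + 1 ≤ N then 6 * ((N : ℝ) - j) / D * j else 0) else 0)
        + (if I = i then (if I + 2 ≤ j ∧ j ≤ N then
            6 * ((N : ℝ) + 1 - j) / D * -((j : ℝ) - 1 - i) else 0) else 0)
        + (if I = i - 1 then (if 1 ≤ i ∧ I + 2 ≤ j ∧ j ≤ N then
            6 * ((N : ℝ) + 1 - j) / D * -((i : ℝ) - 1) else 0) else 0)) := by
    simp only [Finset.sum_apply, Pi.smul_apply, smul_eq_mul]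
    refine Finset.sum_congr rfl fun I hI => ?_
    rw [Finset.mem_Icc] at hI
    have : ∀ J ∈ Finset.Icc (I + 2) N, (6 * ((N : ℝ) + 1 - (J : ℝ)) / D) * elemMatrix I J i j =
      (if J = j + 1 then (if I = i then 6 * ((N : ℝ) - j) / D * j else 0) else 0) +
      (if J = j then (if I = i then 6 * ((N : ℝ) + 1 - j) / D * -((j : ℝ) - 1 - i) else 0) else 0) +
      (if J = j then (if I + 1 = i then 6 * ((N : ℝ) + 1 - j) / D * -((i : ℝ) - 1) else 0)
        else 0) := by
      intro J hJ
      rw [aux_elem I J i j (Finset.mem_Icc.1 hJ).1, mul_add, mul_add]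
      congr 1
      · congr 1
        · split_ifs with h1 h2
          · subst h1; push_cast; ring
          · simp
          · simp
        · split_ifs with h1 h2
          · subst h1; rfl
          · simp
          · simp
      · split_ifs with h1 h2
        · subst h1; rfl
        · simp
        · simp
    rw [Finset.sum_congr rfl this, Finset.sum_add_distrib, Finset.sum_add_distrib,
      Finset.sum_ite_eq', Finset.sum_ite_eq', Finset.sum_ite_eq']
    simp only [Finset.mem_Icc]
    congr 1
    · congr 1 <;> split_ifs <;> rfl
    · split_ifs <;> first | rfl | (exfalso; omega)
  rw [e, Finset.sum_add_distrib, Finset.sum_add_distrib,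
      Finset.sum_ite_eq', Finset.sum_ite_eq', Finset.sum_ite_eq']
  simp only [Finset.mem_Icc]
  by_cases h : 1 ≤ i ∧ i < j ∧ j ≤ N
  · obtain ⟨h1, h2, h3⟩ := h
    have t1 : (if 1 ≤ i ∧ i ≤ N then (if i + 2 ≤ j + 1 ∧ j + 1 ≤ N then
        6 * ((N : ℝ) - j) / D * j else 0) else 0) = 6 * ((N : ℝ) - j) / D * j := by
      rw [if_pos (by omega)]
      split_ifs with h
      · rfl
      · obtain rfl : j = N := by omega
        simp
    have t2 : (if 1 ≤ i ∧ i ≤ N then (if i + 2 ≤ j ∧ j ≤ N then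
        6 * ((N : ℝ) + 1 - j) / D * -((j : ℝ) - 1 - i) else 0) else 0) =
        6 * ((N : ℝ) + 1 - j) / D * -((j : ℝ) - 1 - i) := by
      rw [if_pos (by omega)]
      split_ifs with h
      · rfl
      · obtain rfl : j = i + 1 := by omega
        simp
    have t3 : (if 1 ≤ i - 1 ∧ i - 1 ≤ N then (if 1 ≤ i ∧ i - 1 + 2 ≤ j ∧ j ≤ N then
        6 * ((N : ℝ) + 1 - j) / D * -((i : ℝ) - 1) else 0) else 0) =
        6 * ((N : ℝ) + 1 - j) / D * -((i : ℝ) - 1) := by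
      by_cases h : i = 1
      · subst h; simp
      · rw [if_pos (by omega), if_pos (by omega)]
    rw [t1, t2, t3, if_pos ⟨h1, h2, h3⟩]
    ring
  · rw [if_neg h]
    split_ifs <;> first | (exfalso; omega) | simp

/-- The paper's "linearly-rising" combination: `∑_{J=3}^N (J−2)(N+1−J) = N(N−1)(N−2)/6`;
the weights `r_{IJ} = 6(N+1−J)/(N(N−1)(N−2))` sum to `1`; the induced matrix
`A = ∑_{I,J} r_{IJ} E^{(I,J)}` of log-spacing weights has entries
`A_{ij} = 6(2N−3j+2)/(N(N−1)(N−2))` for `1 ≤ i < j ≤ N` and `0` otherwise; and the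
entries of `A` sum to zero. -/
theorem linearly_rising_combination (N : ℕ) (hN : 3 ≤ N) :
    (∑ J ∈ Finset.Icc 3 N, (J - 2) * (N + 1 - J) = N * (N - 1) * (N - 2) / 6) ∧
    (∑ I ∈ Finset.Icc 1 N, ∑ J ∈ Finset.Icc (I + 2) N,
        6 * ((N : ℝ) + 1 - (J : ℝ)) / ((N : ℝ) * ((N : ℝ) - 1) * ((N : ℝ) - 2)) = 1) ∧
    (∀ i j : ℕ,
      (∑ I ∈ Finset.Icc 1 N, ∑ J ∈ Finset.Icc (I + 2) N,
          (6 * ((N : ℝ) + 1 - (J : ℝ)) / ((N : ℝ) * ((N : ℝ) - 1) * ((N : ℝ) - 2)))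
            • elemMatrix I J) i j =
        if 1 ≤ i ∧ i < j ∧ j ≤ N then
          6 * (2 * (N : ℝ) - 3 * (j : ℝ) + 2) / ((N : ℝ) * ((N : ℝ) - 1) * ((N : ℝ) - 2))
        else 0) ∧
    ∑ i ∈ Finset.Icc 1 N, ∑ j ∈ Finset.Icc (i + 1) N,
      (∑ I ∈ Finset.Icc 1 N, ∑ J ∈ Finset.Icc (I + 2) N,
        (6 * ((N : ℝ) + 1 - (J : ℝ)) / ((N : ℝ) * ((N : ℝ) - 1) * ((N : ℝ) - 2)))
          • elemMatrix I J) i j = 0 := by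
  have hN' : (3 : ℝ) ≤ N := by exact_mod_cast hN
  have hD : (N : ℝ) * ((N : ℝ) - 1) * ((N : ℝ) - 2) ≠ 0 := by
    have h1 : (N : ℝ) ≠ 0 := by linarith
    have h2 : (N : ℝ) - 1 ≠ 0 := by linarith
    have h3 : (N : ℝ) - 2 ≠ 0 := by linarith
    exact mul_ne_zero (mul_ne_zero h1 h2) h3
  refine ⟨?_, ?_, fun i j => aux_entry N _ i j, ?_⟩
  · obtain ⟨m, rfl⟩ : ∃ m, N = m + 2 := ⟨N - 2, by omega⟩
    symm
    apply Nat.div_eq_of_eq_mul_right (by norm_num)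
    have h := aux_one ((m + 2 : ℕ) : ℝ) m
    have hc : ((∑ J ∈ Finset.Icc 3 (m + 2), (J - 2) * (m + 2 + 1 - J) : ℕ) : ℝ) =
        ∑ J ∈ Finset.Icc 3 (m + 2), ((J : ℝ) - 2) * (((m + 2 : ℕ) : ℝ) + 1 - J) := by
      rw [Nat.cast_sum]
      refine Finset.sum_congr rfl fun J hJ => ?_
      rw [Finset.mem_Icc] at hJ
      rw [Nat.cast_mul, Nat.cast_sub (by omega), Nat.cast_sub (by omega)]
      push_cast; ring
    have e1 : m + 2 - 1 = m + 1 := by omega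
    have e2 : m + 2 - 2 = m := by omega
    rw [e1, e2]
    have : (((m + 2) * (m + 1) * m : ℕ) : ℝ) =
        ((6 * ∑ J ∈ Finset.Icc 3 (m + 2), (J - 2) * (m + 2 + 1 - J) : ℕ) : ℝ) := by
      rw [Nat.cast_mul 6, hc, h]
      push_cast; ring
    exact_mod_cast this
  · generalize hDD : (N : ℝ) * ((N : ℝ) - 1) * ((N : ℝ) - 2) = D at *
    have : ∀ I ∈ Finset.Icc 1 N, ∑ J ∈ Finset.Icc (I + 2) N, 6 * ((N : ℝ) + 1 - (J : ℝ)) / D =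
        3 * (N * (N - 1)) / D + (-(3 * (2 * N - 1)) / D) * (I : ℝ) + (3 / D) * (I : ℝ) ^ 2 := by
      intro I hI
      rw [Finset.mem_Icc] at hI
      have h6 : ∀ J ∈ Finset.Icc (I + 2) N, 6 * ((N : ℝ) + 1 - (J : ℝ)) / D =
          6 * ((N : ℝ) + 1) / D - 6 / D * (J : ℝ) := fun J _ => by ring
      by_cases h : I = N
      · subst h
        rw [Finset.Icc_eq_empty (by omega)]
        simp only [Finset.sum_empty]; ring
      · rw [Finset.sum_congr rfl h6, aux_arith _ _ _ _ (by omega)]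
        push_cast; ring
    rw [Finset.sum_congr rfl this, aux_quad]
    field_simp
    rw [← hDD]; ring
  · simp only [aux_entry]
    generalize (N : ℝ) * ((N : ℝ) - 1) * ((N : ℝ) - 2) = D at *
    have : ∀ i ∈ Finset.Icc 1 N, (∑ j ∈ Finset.Icc (i + 1) N,
        if 1 ≤ i ∧ i < j ∧ j ≤ N then 6 * (2 * (N : ℝ) - 3 * (j : ℝ) + 2) / D else 0) =
        3 * (N * (N + 1)) / D + (-(3 * (4 * N + 1)) / D) * (i : ℝ) + (9 / D) * (i : ℝ) ^ 2 := by
      intro i hi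
      rw [Finset.mem_Icc] at hi
      have h6 : ∀ j ∈ Finset.Icc (i + 1) N, (if 1 ≤ i ∧ i < j ∧ j ≤ N then
          6 * (2 * (N : ℝ) - 3 * (j : ℝ) + 2) / D else 0) =
          6 * (2 * (N : ℝ) + 2) / D - 18 / D * (j : ℝ) := fun j hj => by
        rw [Finset.mem_Icc] at hj
        rw [if_pos (by omega)]; ring
      rw [Finset.sum_congr rfl h6, aux_arith _ _ _ _ (by omega)]
      push_cast; ring
    rw [Finset.sum_congr rfl this, aux_quad]
    ring
end
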